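/- arXiv:1406.3844 — 3 statements merged into one kernel-verified Lean document; each statement's English description precedes it below -/
import Mathlib

section
/- Let G be a finite graph and M a module of G. Then the distinguishing number of G is at least the distinguishing number of the subgraph of G induced on M, i.e. D(G) ≥ D(G[M]). -/
/-- A permutation of the vertices is a graph automorphism if it preserves adjacency. -/
def IsGraphAut {V : Type*} (G : SimpleGraph V) (σ : Equiv.Perm V) : Prop :=
  ∀ u v : V, G.Adj (σ u) (σ v) ↔ G.Adj u v

/-- A labeling with `r` labels is distinguishing if no nontrivial automorphism preserves it. -/
def IsDistinguishing {V : Type*} (G : SimpleGraph V) {r : ℕ} (c : V → Fin r) : Prop :=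
  ∀ σ : Equiv.Perm V, IsGraphAut G σ → (∀ v, c (σ v) = c v) → σ = Equiv.refl V

/-- The distinguishing number of a graph: the least `r` admitting an `r`-distinguishing
labeling. -/
noncomputable def distinguishingNumber {V : Type*} (G : SimpleGraph V) : ℕ :=
  sInf {r : ℕ | ∃ c : V → Fin r, IsDistinguishing G c}

/-- `M` is a module of `G`: every vertex outside `M` is adjacent to all of `M` or to
none of `M`. -/
def SimpleGraph.IsModuleSet {V : Type*} (G : SimpleGraph V) (M : Set V) : Prop :=
  ∀ y ∉ M, (∀ x ∈ M, G.Adj x y) ∨ (∀ x ∈ M, ¬ G.Adj x y)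

/-!
An automorphism of `G[M]` extends by the identity to an automorphism of `G`, because a vertex
outside the module `M` is adjacent to `x ∈ M` if and only if it is adjacent to the image of `x`.
If the given automorphism preserves the restriction to `M` of a distinguishing labeling of `G`,
its extension preserves the labeling itself and is therefore trivial.
-/

section

variable {V : Type*} {G : SimpleGraph V} {M : Set V}

lemma SimpleGraph.IsModuleSet.adj_iff_adj (hM : G.IsModuleSet M) {x x' y : V}
    (hx : x ∈ M) (hx' : x' ∈ M) (hy : y ∉ M) : G.Adj x y ↔ G.Adj x' y := by
  rcases hM y hy with hall | hnone
  · exact iff_of_true (hall x hx) (hall x' hx')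
  · exact iff_of_false (hnone x hx) (hnone x' hx')

lemma IsGraphAut.ofSubtype [DecidablePred (· ∈ M)] {τ : Equiv.Perm M}
    (hτ : IsGraphAut (G.induce M) τ) (hM : G.IsModuleSet M) :
    IsGraphAut G (Equiv.Perm.ofSubtype τ) := by
  have adj_outside {x y : V} (hx : x ∈ M) (hy : y ∉ M) :
      G.Adj (Equiv.Perm.ofSubtype τ x) (Equiv.Perm.ofSubtype τ y) ↔ G.Adj x y := by
    rw [Equiv.Perm.ofSubtype_apply_of_mem τ hx, Equiv.Perm.ofSubtype_apply_of_not_mem τ hy]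
    exact hM.adj_iff_adj (τ ⟨x, hx⟩).2 hx hy
  intro u v
  by_cases hu : u ∈ M <;> by_cases hv : v ∈ M
  · rw [Equiv.Perm.ofSubtype_apply_of_mem τ hu, Equiv.Perm.ofSubtype_apply_of_mem τ hv]
    exact hτ ⟨u, hu⟩ ⟨v, hv⟩
  · exact adj_outside hu hv
  · rw [G.adj_comm, G.adj_comm u]
    exact adj_outside hv hu
  · rw [Equiv.Perm.ofSubtype_apply_of_not_mem τ hu, Equiv.Perm.ofSubtype_apply_of_not_mem τ hv]

lemma apply_permOfSubtype_eq [DecidablePred (· ∈ M)] {α : Type*} {c : V → α} {τ : Equiv.Perm M}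
    (hc : ∀ x : M, c (τ x) = c x) (v : V) : c (Equiv.Perm.ofSubtype τ v) = c v := by
  by_cases hv : v ∈ M
  · rw [Equiv.Perm.ofSubtype_apply_of_mem τ hv]
    exact hc ⟨v, hv⟩
  · rw [Equiv.Perm.ofSubtype_apply_of_not_mem τ hv]

lemma IsDistinguishing.domRestrict {r : ℕ} {c : V → Fin r} (hc : IsDistinguishing G c)
    (hM : G.IsModuleSet M) : IsDistinguishing (G.induce M) (M.domRestrict c) := by
  classical
  intro τ hτ hcτ
  have ofSubtype_eq_one : Equiv.Perm.ofSubtype τ = 1 :=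
    hc _ (hτ.ofSubtype hM) (apply_permOfSubtype_eq hcτ)
  exact Equiv.Perm.ofSubtype_injective (ofSubtype_eq_one.trans (map_one _).symm)

lemma isDistinguishing_of_injective {r : ℕ} {c : V → Fin r} (hc : Function.Injective c) :
    IsDistinguishing G c :=
  fun _ _ hσ => Equiv.ext fun v => hc (hσ v)

end

theorem stmt_2_general {V : Type*} (G : SimpleGraph V) (M : Set V) (hM : G.IsModuleSet M)
    (hG : ∃ r, ∃ c : V → Fin r, IsDistinguishing G c) :
    distinguishingNumber (G.induce M) ≤ distinguishingNumber G := by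
  obtain ⟨c, hc⟩ : ∃ c : V → Fin (distinguishingNumber G), IsDistinguishing G c :=
    Nat.sInf_mem hG
  exact Nat.sInf_le ⟨M.domRestrict c, hc.domRestrict hM⟩

theorem stmt_2 {V : Type*} [Fintype V] (G : SimpleGraph V) (M : Set V)
    (hM : G.IsModuleSet M) :
    distinguishingNumber (SimpleGraph.induce M G) ≤ distinguishingNumber G :=
  stmt_2_general G M hM
    ⟨_, _, isDistinguishing_of_injective (Fintype.equivFin V).injective⟩
end

section
/- For all integers p ≥ 2 with p ≠ 4 and all m ≥ 2, the distinguishing number of the circulant graph C(m,p) equals m + 1. -/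
/-- The jump set `A = {p-1+r·p, p+1+r·p : 0 ≤ r ≤ m-1}` inside `ℤ_{mp}`. -/
def jumpSet (m p : ℕ) : Set (ZMod (m * p)) :=
  {a | ∃ r < m, a = ((p - 1 + r * p : ℕ) : ZMod (m * p)) ∨
                a = ((p + 1 + r * p : ℕ) : ZMod (m * p))}

/-- The circulant graph `C(m,p)` on vertex set `ℤ_{mp}`: `i` and `j` are adjacent iff
`j - i (mod mp)` lies in the jump set. -/
def circC (m p : ℕ) : SimpleGraph (ZMod (m * p)) :=
  SimpleGraph.circulantGraph (jumpSet m p)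

/-- The set `M_i = {i + r·p : 0 ≤ r ≤ m-1}` in `ℤ_{mp}`. -/
def Mset (m p i : ℕ) : Set (ZMod (m * p)) :=
  {v | ∃ r < m, v = ((i + r * p : ℕ) : ZMod (m * p))}

open SimpleGraph

section BlowUp

variable {V W α : Type*} {H : SimpleGraph W} {π : V → W}

lemma IsGraphAut.comap_lift {τ : Equiv.Perm W} (hτ : IsGraphAut H τ) {σ : Equiv.Perm V}
    (hσ : ∀ v, π (σ v) = τ (π v)) : IsGraphAut (H.comap π) σ := fun u v => by
  simp only [comap_adj, hσ, hτ _ _]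

lemma IsDistinguishing.injOn_fiber {r : ℕ} {c : V → Fin r}
    (hc : IsDistinguishing (H.comap π) c) (w : W) : Set.InjOn c (π ⁻¹' {w}) := by
  classical
  intro u hu v hv huv
  have hπ : π u = π v := hu.trans hv.symm
  have hid : IsGraphAut H (Equiv.refl W) := fun _ _ => Iff.rfl
  exact Equiv.swap_eq_refl_iff.1 <|
    hc _ (hid.comap_lift (Equiv.apply_swap_eq_self hπ)) (Equiv.apply_swap_eq_self huv)

lemma bijective_prodMk_of_bijOn_fiber {c : V → α}
    (h : ∀ w, Set.BijOn c (π ⁻¹' {w}) Set.univ) : (fun v => (π v, c v)).Bijective := by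
  refine ⟨fun u v huv => ?_, fun ⟨w, a⟩ => ?_⟩
  · obtain ⟨hπ, hcuv⟩ := Prod.mk.inj huv
    exact (h (π v)).injOn hπ rfl hcuv
  · obtain ⟨v, rfl, rfl⟩ := (h w).surjOn (Set.mem_univ a)
    exact ⟨v, rfl⟩

lemma exists_perm_lift {c : V → α} (h : (fun v => (π v, c v)).Bijective) (τ : Equiv.Perm W) :
    ∃ σ : Equiv.Perm V, (∀ v, π (σ v) = τ (π v)) ∧ ∀ v, c (σ v) = c v := by
  let e := Equiv.ofBijective _ h
  let σ := e.symm.permCongr (τ.prodCongr (Equiv.refl α))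
  have hσ (v : V) : e (σ v) = (τ (π v), c v) := by simp [σ, e, Equiv.permCongr_apply]
  exact ⟨σ, fun v => congrArg Prod.fst (hσ v), fun v => congrArg Prod.snd (hσ v)⟩

lemma IsDistinguishing.lt_of_encard_fiber {m r : ℕ} {c : V → Fin r}
    (hc : IsDistinguishing (H.comap π) c) (hπ : π.Surjective)
    (hfiber : ∀ w, (π ⁻¹' {w}).encard = m) {τ : Equiv.Perm W} (hτ : IsGraphAut H τ)
    (hτ_ne : τ ≠ Equiv.refl W) : m < r := by
  by_contra! hrm
  have hbij (w : W) : Set.BijOn c (π ⁻¹' {w}) Set.univ := by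
    have hcard : (Set.univ : Set (Fin r)).encard ≤ (c '' (π ⁻¹' {w})).encard := by
      simpa [(hc.injOn_fiber w).encard_image, hfiber] using hrm
    have himage : c '' (π ⁻¹' {w}) = Set.univ :=
      (Set.toFinite _).eq_of_subset_of_encard_le (Set.subset_univ _) hcard
    exact himage ▸ (hc.injOn_fiber w).bijOn_image
  obtain ⟨σ, hπσ, hcσ⟩ := exists_perm_lift (bijective_prodMk_of_bijOn_fiber hbij) τ
  have hσ : σ = Equiv.refl V := hc σ (hτ.comap_lift hπσ) hcσ
  refine hτ_ne (Equiv.ext <| hπ.forall.2 fun v => ?_)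
  rw [← hπσ, hσ, Equiv.refl_apply, Equiv.refl_apply]

lemma IsGraphAut.preimage_neighborSet {G : SimpleGraph V} {σ : Equiv.Perm V}
    (hσ : IsGraphAut G σ) (v : V) : σ ⁻¹' G.neighborSet (σ v) = G.neighborSet v :=
  Set.ext fun w => hσ v w

lemma neighborSet_comap_eq_iff (hπ : π.Surjective) (hH : H.neighborSet.Injective) {u v : V} :
    (H.comap π).neighborSet u = (H.comap π).neighborSet v ↔ π u = π v := by
  change π ⁻¹' H.neighborSet (π u) = π ⁻¹' H.neighborSet (π v) ↔ π u = π v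
  rw [hπ.preimage_injective.eq_iff, hH.eq_iff]

lemma IsGraphAut.comap_fiber_iff {σ : Equiv.Perm V} (hσ : IsGraphAut (H.comap π) σ)
    (hπ : π.Surjective) (hH : H.neighborSet.Injective) {u v : V} :
    π (σ u) = π (σ v) ↔ π u = π v := by
  rw [← neighborSet_comap_eq_iff hπ hH, ← neighborSet_comap_eq_iff hπ hH,
    ← hσ.preimage_neighborSet u, ← hσ.preimage_neighborSet v,
    σ.surjective.preimage_injective.eq_iff]

lemma IsGraphAut.exists_descent {σ : Equiv.Perm V} (hσ : IsGraphAut (H.comap π) σ)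
    (hπ : π.Surjective) (hH : H.neighborSet.Injective) :
    ∃ τ : Equiv.Perm W, IsGraphAut H τ ∧ ∀ v, π (σ v) = τ (π v) := by
  let e := Setoid.quotientKerEquivOfSurjective π hπ
  let τ : Equiv.Perm W := e.permCongr <|
    Quotient.congr σ fun u v => (hσ.comap_fiber_iff hπ hH (u := u) (v := v)).symm
  have hτ (v : V) : π (σ v) = τ (π v) := by
    have he : e.symm (π v) = Quotient.mk _ v := e.symm_apply_apply (Quotient.mk _ v)
    rw [Equiv.permCongr_apply, he]
    rfl
  refine ⟨τ, hπ.forall₂.2 fun u v => ?_, hτ⟩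
  rw [← hτ, ← hτ]
  exact hσ u v

lemma exists_bijOn_fiber [Nonempty α] {t : W → Set α} (hfin : ∀ w, (π ⁻¹' {w}).Finite)
    (hcard : ∀ w, (π ⁻¹' {w}).encard = (t w).encard) :
    ∃ c : V → α, ∀ w, Set.BijOn c (π ⁻¹' {w}) (t w) := by
  choose g hg using fun w => (hfin w).exists_bijOn_of_encard_eq (hcard w)
  refine ⟨fun v => g (π v) v, fun w => (hg w).congr ?_⟩
  rintro v rfl
  rfl

lemma IsDistinguishing.comap_of_bijOn_fiber_compl {r : ℕ} {f : W → Fin r} {c : V → Fin r}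
    (hf : IsDistinguishing H f) (hπ : π.Surjective) (hH : H.neighborSet.Injective)
    (hc : ∀ w, Set.BijOn c (π ⁻¹' {w}) {f w}ᶜ) : IsDistinguishing (H.comap π) c := by
  intro σ hσ hcσ
  obtain ⟨τ, hτ, hπσ⟩ := hσ.exists_descent hπ hH
  have hfτ (w : W) : f (τ w) = f w := by
    by_contra hne
    obtain ⟨v, rfl, hv⟩ := (hc w).surjOn hne
    exact (hc (τ (π v))).mapsTo (hπσ v) (by rw [hcσ, hv]; rfl)
  have hτ_refl : τ = Equiv.refl W := hf τ hτ hfτ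
  ext1 v
  exact (hc (π v)).injOn (by rw [Set.mem_preimage, hπσ, hτ_refl]; rfl) rfl (hcσ v)

lemma IsDistinguishing.exists_comap {m : ℕ} {f : W → Fin (m + 1)} (hf : IsDistinguishing H f)
    (hπ : π.Surjective) (hfiber : ∀ w, (π ⁻¹' {w}).encard = m) (hH : H.neighborSet.Injective) :
    ∃ c : V → Fin (m + 1), IsDistinguishing (H.comap π) c := by
  have hcard (w : W) : (π ⁻¹' {w}).encard = ({f w}ᶜ : Set (Fin (m + 1))).encard := by
    rw [hfiber, ← Set.Finite.cast_ncard_eq (Set.toFinite _), Set.ncard_compl, Set.ncard_singleton,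
      Nat.card_fin, Nat.add_sub_cancel]
  obtain ⟨c, hc⟩ := exists_bijOn_fiber (fun w => Set.finite_of_encard_eq_coe (hfiber w)) hcard
  exact ⟨c, hf.comap_of_bijOn_fiber_compl hπ hH hc⟩

theorem distinguishingNumber_comap {m : ℕ} (hπ : π.Surjective)
    (hfiber : ∀ w, (π ⁻¹' {w}).encard = m) (hH : H.neighborSet.Injective)
    (haut : ∃ τ, IsGraphAut H τ ∧ τ ≠ Equiv.refl W)
    (hlabel : ∃ f : W → Fin (m + 1), IsDistinguishing H f) :
    distinguishingNumber (H.comap π) = m + 1 := by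
  obtain ⟨τ, hτ, hτ_ne⟩ := haut
  obtain ⟨f, hf⟩ := hlabel
  refine IsLeast.csInf_eq ⟨hf.exists_comap hπ hfiber hH, ?_⟩
  rintro r ⟨c, hc⟩
  exact hc.lt_of_encard_fiber hπ hfiber hτ hτ_ne

end BlowUp

section Circulant

variable {A B : Type*} [AddGroup A] [AddGroup B]

lemma isGraphAut_addRight_circulantGraph (S : Set A) (d : A) :
    IsGraphAut (circulantGraph S) (Equiv.addRight d) :=
  fun _ _ => circulantGraph_adj_translate

lemma comap_circulantGraph (f : A →+ B) {S : Set B} (hS : 0 ∉ S) :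
    (circulantGraph S).comap f = circulantGraph (f ⁻¹' S) := by
  ext u v
  simp only [comap_adj, circulantGraph_adj, Set.mem_preimage, map_sub]
  refine and_congr_left fun h => ⟨fun hne huv => hne (congrArg f huv), fun _ hf => hS ?_⟩
  simpa [hf] using h

lemma card_fiber_mul_card {f : A →+ B} (hf : Function.Surjective f) (b : B) :
    Nat.card (f ⁻¹' {b}) * Nat.card B = Nat.card A := by
  have hindex : f.ker.index = Nat.card B := by
    rw [AddSubgroup.index_ker, AddMonoidHom.range_eq_top.2 hf, AddSubgroup.card_top]
  rw [Nat.card_congr (AddMonoidHom.fiberEquivKerOfSurjective hf b), ← hindex,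
    AddSubgroup.card_mul_index]

end Circulant

section Cycle

lemma circulantGraph_one_adj {R : Type*} [Ring R] [Nontrivial R] {u v : R} :
    (circulantGraph {1}).Adj u v ↔ v = u + 1 ∨ u = v + 1 := by
  rw [circulantGraph_adj, Set.mem_singleton_iff, Set.mem_singleton_iff, sub_eq_iff_eq_add',
    sub_eq_iff_eq_add', or_comm, and_iff_right_iff_imp, add_comm v, add_comm u]
  rintro (h | h) rfl <;> simp at h

variable {n : ℕ} [Fact (1 < n)]

/-- In `ℤ_4` the vertices `u` and `u + 2` have the same neighbours. -/
lemma neighborSet_circulantGraph_one_injective (hn : n ≠ 4) :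
    (circulantGraph ({1} : Set (ZMod n))).neighborSet.Injective := by
  intro u v huv
  have adj_of_adj {w : ZMod n} : (circulantGraph {1}).Adj u w → (circulantGraph {1}).Adj v w :=
    fun h => huv.subset h
  simp only [circulantGraph_one_adj] at adj_of_adj
  rcases adj_of_adj (w := u + 1) (Or.inl rfl) with hsucc | hsucc
  · exact add_right_cancel hsucc
  rcases adj_of_adj (w := u - 1) (Or.inr (sub_add_cancel u 1).symm) with hpred | hpred
  · have four_eq_zero : ((4 : ℕ) : ZMod n) = 0 := by
      push_cast
      linear_combination -hsucc - hpred
    have hn_dvd : n ∣ 2 := by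
      have hdvd := (ZMod.natCast_eq_zero_iff 4 n).1 four_eq_zero
      have := Nat.le_of_dvd (by norm_num) hdvd
      interval_cases n <;> omega
    have two_eq_zero : ((2 : ℕ) : ZMod n) = 0 := (ZMod.natCast_eq_zero_iff 2 n).2 hn_dvd
    push_cast at two_eq_zero
    linear_combination -hsucc - two_eq_zero
  · linear_combination -hpred

lemma IsGraphAut.eq_refl_of_circulantGraph_one {σ : Equiv.Perm (ZMod n)}
    (hσ : IsGraphAut (circulantGraph {1}) σ) (h0 : σ 0 = 0) (h1 : σ 1 = 1) :
    σ = Equiv.refl (ZMod n) := by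
  have fixes_natCast (k : ℕ) : σ (k : ZMod n) = k := by
    induction k using Nat.twoStepInduction with
    | zero => simpa using h0
    | one => simpa using h1
    | more k hk hk_succ =>
      push_cast at hk_succ ⊢
      have hadj := (hσ (k + 1) (k + 2)).2 (circulantGraph_one_adj.2 (Or.inl (by ring)))
      rw [hk_succ, circulantGraph_one_adj] at hadj
      rcases hadj with hforward | hback
      · linear_combination hforward
      · have hσk : σ (k + 2) = σ k := (add_right_cancel hback).symm.trans hk.symm
        exact (hσk.trans hk).trans (σ.injective hσk).symm
  ext1 v
  simpa using fixes_natCast v.val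

lemma exists_isDistinguishing_circulantGraph_one {r : ℕ} (hr : 3 ≤ r) :
    ∃ f : ZMod n → Fin r, IsDistinguishing (circulantGraph {1}) f := by
  let f (i : ZMod n) : Fin r := if i = 0 then ⟨0, by omega⟩ else if i = 1 then ⟨1, by omega⟩
    else ⟨2, by omega⟩
  have eq_zero {i : ZMod n} (hi : f i = f 0) : i = 0 := by grind
  have eq_one {i : ZMod n} (hi : f i = f 1) : i = 1 := by grind
  exact ⟨f, fun σ hσ hfσ =>
    hσ.eq_refl_of_circulantGraph_one (eq_zero (hfσ 0)) (eq_one (hfσ 1))⟩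

end Cycle

section Reduction

variable (m p : ℕ)

/-- The reduction `ℤ_{mp} → ℤ_p`; its fibres are the sets `M_i`. -/
abbrev reduction : ZMod (m * p) →+* ZMod p :=
  ZMod.castHom (dvd_mul_left p m) (ZMod p)

lemma reduction_surjective : Function.Surjective (reduction m p) :=
  ZMod.castHom_surjective (dvd_mul_left p m)

lemma encard_reduction_fiber [NeZero m] [NeZero p] (i : ZMod p) :
    (reduction m p ⁻¹' {i}).encard = m := by
  have hcard : (reduction m p ⁻¹' {i}).ncard * p = m * p := by
    simpa using card_fiber_mul_card (f := (reduction m p).toAddMonoidHom)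
      (reduction_surjective m p) i
  rw [← Set.Finite.cast_ncard_eq (Set.toFinite _), Nat.eq_of_mul_eq_mul_right (NeZero.pos p) hcard]

lemma Mset_eq_preimage [NeZero m] [NeZero p] (i : ℕ) :
    Mset m p i = reduction m p ⁻¹' {(i : ZMod p)} := by
  ext v
  constructor
  · rintro ⟨r, -, rfl⟩
    simp
  · intro hv
    have hdvd : p ∣ (v - i).val := by
      rw [← ZMod.natCast_eq_zero_iff, ← map_natCast (reduction m p), ZMod.natCast_zmod_val,
        map_sub, map_natCast, sub_eq_zero]
      exact hv
    obtain ⟨r, hr⟩ := hdvd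
    have hlt : p * r < p * m := by
      rw [← hr, mul_comm p]
      exact ZMod.val_lt _
    refine ⟨r, Nat.lt_of_mul_lt_mul_left hlt, ?_⟩
    rw [mul_comm r, ← hr, Nat.cast_add, ZMod.natCast_zmod_val, add_sub_cancel]

lemma jumpSet_eq_preimage [NeZero m] [NeZero p] :
    jumpSet m p = reduction m p ⁻¹' {1, -1} := by
  have hunion : jumpSet m p = Mset m p (p - 1) ∪ Mset m p (p + 1) := by
    ext
    simp only [jumpSet, Mset, Set.mem_ofPred_eq, Set.mem_union, and_or_left, exists_or]
  have hpred : ((p - 1 : ℕ) : ZMod p) = -1 := by simp [Nat.cast_pred (NeZero.pos p)]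
  have hsucc : ((p + 1 : ℕ) : ZMod p) = 1 := by simp
  rw [hunion, Mset_eq_preimage, Mset_eq_preimage, hpred, hsucc, ← Set.preimage_union,
    Set.union_comm, Set.singleton_union]

lemma circC_eq_comap [NeZero m] [Fact (1 < p)] :
    circC m p = (circulantGraph {1}).comap (reduction m p) := by
  have hsymm : circulantGraph ({1} : Set (ZMod p)) = circulantGraph {1, -1} := by
    rw [circulantGraph_eq_symm, Set.neg_singleton, Set.singleton_union]
  rw [circC, jumpSet_eq_preimage, hsymm]
  exact (comap_circulantGraph (reduction m p).toAddMonoidHom (by simp)).symm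

end Reduction

theorem stmt_5 (m p : ℕ) (hm : 2 ≤ m) (hp : 2 ≤ p) (hp4 : p ≠ 4) :
    distinguishingNumber (circC m p) = m + 1 := by
  have : NeZero m := ⟨by omega⟩
  have : Fact (1 < p) := ⟨hp⟩
  have rotation_ne_refl : Equiv.addRight (1 : ZMod p) ≠ Equiv.refl (ZMod p) := fun h =>
    one_ne_zero (α := ZMod p) (by simpa using DFunLike.congr_fun h 0)
  rw [circC_eq_comap]
  exact distinguishingNumber_comap (reduction_surjective m p) (encard_reduction_fiber m p)
    (neighborSet_circulantGraph_one_injective hp4)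
    ⟨Equiv.addRight 1, isGraphAut_addRight_circulantGraph {1} 1, rotation_ne_refl⟩
    (exists_isDistinguishing_circulantGraph_one (by omega))
end

section
/- Let m ≥ 2 and p ≥ 2 be integers. In the circulant graph C(m,p), for every vertex i with 1 ≤ i ≤ p−1, the graph distance from vertex 0 to vertex i equals i if 1 ≤ i ≤ ⌊p/2⌋, and equals p − i if ⌊p/2⌋ < i ≤ p−1. -/
/-!
Distinct vertices of `C(m,p)` are adjacent exactly when their residues mod `p` differ by `±1`, so
for `p ≥ 2` the graph is the `p`-cycle with every vertex replaced by `m` independent copies. A walk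
of length `n` moves the residue by at most `n` around the cycle; conversely, the shorter arc between
two different residues lifts to a walk between any two vertices with these residues. Hence vertices
with different residues are as far apart as their residues on the `p`-cycle, where the distance from
`0` to `a` is `a.valMinAbs.natAbs`.
-/

theorem natAbs_valMinAbs_intCast_le {n : ℕ} [NeZero n] (k : ℤ) :
    (k : ZMod n).valMinAbs.natAbs ≤ k.natAbs :=
  ZMod.natAbs_min_of_le_div_two n _ k (ZMod.coe_valMinAbs _) (ZMod.natAbs_valMinAbs_le _)

theorem natAbs_valMinAbs_natCast {n i : ℕ} (hi : i < n) :
    (i : ZMod n).valMinAbs.natAbs = if i ≤ n / 2 then i else n - i := by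
  split_ifs with h
  · rw [ZMod.valMinAbs_natCast_of_le_half h, Int.natAbs_natCast]
  · rw [ZMod.valMinAbs_natCast_of_half_lt (not_le.1 h) hi]
    omega

section

variable {m p : ℕ}

/-- The reduction `ℤ_{mp} → ℤ_p`; its fibres are the sets `M_i`. -/
abbrev residue : ZMod (m * p) →+* ZMod p :=
  ZMod.castHom (dvd_mul_left p m) (ZMod p)

theorem mem_Mset_iff_residue_eq [NeZero m] {i : ℕ} {v : ZMod (m * p)} :
    v ∈ Mset m p i ↔ residue v = i := by
  constructor
  · rintro ⟨r, -, rfl⟩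
    simp
  · intro hv
    obtain ⟨z, rfl⟩ := ZMod.intCast_surjective v
    rw [map_intCast, ← Int.cast_natCast, ZMod.intCast_eq_intCast_iff_dvd_sub] at hv
    obtain ⟨k, hk⟩ := hv
    -- Since `z = i - p * k`, the index sought is `r = -k mod m`.
    obtain ⟨r, hr⟩ := Int.eq_ofNat_of_zero_le (Int.emod_nonneg (-k) (NeZero.ne (m : ℤ)))
    have hrm : (r : ℤ) < m := hr ▸ Int.emod_lt_of_pos _ (by exact_mod_cast NeZero.pos m)
    refine ⟨r, by exact_mod_cast hrm, ?_⟩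
    rw [← Int.cast_natCast (i + r * p), ZMod.intCast_eq_intCast_iff_dvd_sub]
    refine ⟨-(-k / m), ?_⟩
    push_cast
    linear_combination hk - p * hr + p * Int.emod_add_mul_ediv (-k) m

theorem jumpSet_eq_Mset_union : jumpSet m p = Mset m p (p - 1) ∪ Mset m p (p + 1) := by
  ext a
  simp only [jumpSet, Mset, Set.mem_union, Set.mem_ofPred_eq, and_or_left, exists_or]

theorem mem_jumpSet_iff [NeZero m] [NeZero p] {a : ZMod (m * p)} :
    a ∈ jumpSet m p ↔ residue a = -1 ∨ residue a = 1 := by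
  rw [jumpSet_eq_Mset_union, Set.mem_union, mem_Mset_iff_residue_eq, mem_Mset_iff_residue_eq,
    Nat.cast_pred (NeZero.pos p)]
  simp

theorem circC_adj_iff [NeZero m] [NeZero p] {u v : ZMod (m * p)} :
    (circC m p).Adj u v ↔ u ≠ v ∧ (residue v = residue u + 1 ∨ residue u = residue v + 1) := by
  simp only [circC, SimpleGraph.circulantGraph_adj, mem_jumpSet_iff, map_sub]
  grind

theorem natAbs_valMinAbs_residue_sub_le_length [NeZero m] [NeZero p] {u v : ZMod (m * p)}
    (w : (circC m p).Walk u v) :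
    (residue v - residue u).valMinAbs.natAbs ≤ w.length := by
  induction w with
  | nil => simp
  | @cons u x v hux w ih =>
    have hstep : (residue x - residue u).valMinAbs.natAbs ≤ 1 := by
      obtain ⟨-, h | h⟩ := circC_adj_iff.1 hux
      · simpa [h] using natAbs_valMinAbs_intCast_le (n := p) 1
      · simpa [h] using natAbs_valMinAbs_intCast_le (n := p) (-1)
    calc (residue v - residue u).valMinAbs.natAbs
        = ((residue v - residue x) + (residue x - residue u)).valMinAbs.natAbs := by
          rw [sub_add_sub_cancel]
      _ ≤ (residue v - residue x).valMinAbs.natAbs + (residue x - residue u).valMinAbs.natAbs :=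
          (ZMod.natAbs_valMinAbs_add_le _ _).trans (Int.natAbs_add_le _ _)
      _ ≤ (w.cons hux).length := Nat.add_le_add ih hstep

theorem exists_walk_length_eq_of_residue_eq_add [NeZero m] [NeZero p] [Nontrivial (ZMod p)]
    {n : ℕ} (hn : 1 ≤ n) {u v : ZMod (m * p)} (h : residue v = residue u + n) :
    ∃ w : (circC m p).Walk u v, w.length = n := by
  have adj {x y : ZMod (m * p)} (hxy : residue y = residue x + 1) : (circC m p).Adj x y :=
    circC_adj_iff.2 ⟨by rintro rfl; simp at hxy, .inl hxy⟩
  induction n, hn using Nat.le_induction generalizing u with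
  | base => exact ⟨(adj (by simpa using h)).toWalk, rfl⟩
  | succ n _ ih =>
    obtain ⟨w, hw⟩ := ih (u := u + 1) (by rw [h, map_add, map_one]; push_cast; ring)
    exact ⟨w.cons (adj (by simp)), by simp [hw]⟩

theorem exists_walk_length_eq_natAbs_valMinAbs [NeZero m] [NeZero p] {u v : ZMod (m * p)}
    (h : residue u ≠ residue v) :
    ∃ w : (circC m p).Walk u v, w.length = (residue v - residue u).valMinAbs.natAbs := by
  have : Nontrivial (ZMod p) := ⟨_, _, h⟩
  have hpos : 1 ≤ (residue v - residue u).valMinAbs.natAbs := by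
    rw [Nat.one_le_iff_ne_zero, Int.natAbs_ne_zero, Ne, ZMod.valMinAbs_eq_zero, sub_eq_zero]
    exact h.symm
  have hcoe := ZMod.coe_valMinAbs (residue v - residue u)
  rcases Int.natAbs_eq (residue v - residue u).valMinAbs with hk | hk
  · rw [hk, Int.cast_natCast] at hcoe
    exact exists_walk_length_eq_of_residue_eq_add hpos (by rw [hcoe, add_sub_cancel])
  · rw [hk, Int.cast_neg, Int.cast_natCast, neg_eq_iff_eq_neg, neg_sub] at hcoe
    obtain ⟨w, hw⟩ := exists_walk_length_eq_of_residue_eq_add hpos (u := v) (v := u)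
      (by rw [hcoe, add_sub_cancel])
    exact ⟨w.reverse, by rw [w.length_reverse, hw]⟩

theorem stmt_8_general [NeZero m] [NeZero p] {u v : ZMod (m * p)} (h : residue u ≠ residue v) :
    (circC m p).dist u v = (residue v - residue u).valMinAbs.natAbs := by
  obtain ⟨w, hw⟩ := exists_walk_length_eq_natAbs_valMinAbs h
  apply le_antisymm
  · exact hw ▸ SimpleGraph.dist_le w
  · obtain ⟨w', hw'⟩ := w.reachable.exists_walk_length_eq_dist
    exact hw' ▸ natAbs_valMinAbs_residue_sub_le_length w'

end

theorem stmt_8 (m p : ℕ) (hm : 2 ≤ m) (hp : 2 ≤ p) (i : ℕ) (h1 : 1 ≤ i) (h2 : i ≤ p - 1) :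
    (circC m p).dist 0 ((i : ℕ) : ZMod (m * p)) = if i ≤ p / 2 then i else p - i := by
  have : NeZero m := ⟨by omega⟩
  have : NeZero p := ⟨by omega⟩
  have hi : residue (0 : ZMod (m * p)) ≠ residue (i : ZMod (m * p)) := by
    rw [map_zero, map_natCast, ne_comm, Ne, ZMod.natCast_eq_zero_iff]
    exact Nat.not_dvd_of_pos_of_lt h1 (by omega)
  rw [stmt_8_general hi, map_natCast, map_zero, sub_zero, natAbs_valMinAbs_natCast (by omega)]
end
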